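/- Locality of the location dynamics: for the SparKer model f with Gaussian kernels, the location-gradient field vanishes at infinity: the map x ↦ (1/σ²)(2a_i k_{μ_i}^σ(x) − f(x)) p_i(x) (x − μ_i) ∈ ℝ^d tends to 0 as ‖x‖ → ∞; equivalently, for every ε > 0 there is R > 0 such that ‖∂f(x)/∂μ_i‖ < ε whenever ‖x‖ > R. -/

import Mathlib

open Real Finset

/-- Gaussian kernel with location `μ` and width `σ`. -/
noncomputable def gaussKernel {d : ℕ} (σ : ℝ) (μ x : EuclideanSpace ℝ (Fin d)) : ℝ :=
  Real.exp (-‖x - μ‖ ^ 2 / (2 * σ ^ 2))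

/-- SoftMax activation of the `i`-th kernel in the SparKer ensemble. -/
noncomputable def softmaxAct {d M : ℕ} (σ : ℝ) (μ : Fin M → EuclideanSpace ℝ (Fin d))
    (i : Fin M) (x : EuclideanSpace ℝ (Fin d)) : ℝ :=
  gaussKernel σ (μ i) x / ∑ j, gaussKernel σ (μ j) x

/-- The SparKer model: sparse ensemble of Gaussian kernels with SoftMax competition. -/
noncomputable def sparker {d M : ℕ} (σ : ℝ) (μ : Fin M → EuclideanSpace ℝ (Fin d))
    (a : Fin M → ℝ) (x : EuclideanSpace ℝ (Fin d)) : ℝ :=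
  ∑ i, a i * (softmaxAct σ μ i x * gaussKernel σ (μ i) x)

/-!
A Gaussian decays faster than any power of the norm grows, so `k_{μ_j}(x) • (x - ν) → 0` at infinity
for every `j` and every `ν`. The SoftMax activations lie in `[0, 1]`, and the gradient field is a
finite combination of such decaying terms with bounded coefficients.
-/

open Bornology Filter Topology

section NormedSpace

variable {E : Type*}

lemma tendsto_norm_rpow_mul_exp_neg_mul_norm_sq_cobounded [SeminormedAddCommGroup E]
    {b : ℝ} (hb : 0 < b) (s : ℝ) :
    Tendsto (fun x : E ↦ ‖x‖ ^ s * exp (-b * ‖x‖ ^ 2)) (cobounded E) (𝓝 0) := by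
  have hexp : Tendsto (fun t : ℝ ↦ exp (-(1 / 2) * t)) atTop (𝓝 0) :=
    tendsto_exp_atBot.comp (tendsto_id.const_mul_atTop_of_neg (by norm_num))
  exact ((rpow_mul_exp_neg_mul_sq_isLittleO_exp_neg hb s).trans_tendsto hexp).comp
    tendsto_norm_cobounded_atTop

lemma tendsto_exp_neg_mul_norm_sq_smul_add_cobounded [SeminormedAddCommGroup E]
    [NormedSpace ℝ E] {b : ℝ} (hb : 0 < b) (v : E) :
    Tendsto (fun x : E ↦ exp (-b * ‖x‖ ^ 2) • (x + v)) (cobounded E) (𝓝 0) := by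
  have hself : Tendsto (fun x : E ↦ exp (-b * ‖x‖ ^ 2) • x) (cobounded E) (𝓝 0) := by
    rw [tendsto_zero_iff_norm_tendsto_zero]
    simpa [norm_smul, mul_comm] using
      tendsto_norm_rpow_mul_exp_neg_mul_norm_sq_cobounded (E := E) hb 1
  have hconst : Tendsto (fun x : E ↦ exp (-b * ‖x‖ ^ 2) • v) (cobounded E) (𝓝 0) := by
    simpa using (tendsto_norm_rpow_mul_exp_neg_mul_norm_sq_cobounded (E := E) hb 0).smul_const v
  simpa only [smul_add, add_zero] using hself.add hconst

end NormedSpace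

section SparKer

variable {d M : ℕ} {σ : ℝ}

lemma gaussKernel_pos (σ : ℝ) (μ x : EuclideanSpace ℝ (Fin d)) : 0 < gaussKernel σ μ x :=
  exp_pos _

lemma tendsto_gaussKernel_smul_sub_cobounded (hσ : σ ≠ 0) (μ ν : EuclideanSpace ℝ (Fin d)) :
    Tendsto (fun x ↦ gaussKernel σ μ x • (x - ν)) (cobounded _) (𝓝 0) := by
  have hb : 0 < 1 / (2 * σ ^ 2) := by positivity
  refine ((tendsto_exp_neg_mul_norm_sq_smul_add_cobounded hb (μ - ν)).comp
    (tendsto_sub_const_cobounded μ)).congr fun x ↦ ?_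
  simp only [Function.comp_apply, gaussKernel, sub_add_sub_cancel]
  congr 2
  ring

section SoftMax

variable (σ) (μ : Fin M → EuclideanSpace ℝ (Fin d)) (i : Fin M)

lemma softmaxAct_nonneg (x : EuclideanSpace ℝ (Fin d)) : 0 ≤ softmaxAct σ μ i x :=
  div_nonneg (gaussKernel_pos ..).le (sum_nonneg fun _ _ ↦ (gaussKernel_pos ..).le)

lemma softmaxAct_le_one (x : EuclideanSpace ℝ (Fin d)) : softmaxAct σ μ i x ≤ 1 :=
  div_le_one_of_le₀
    (single_le_sum (f := fun j ↦ gaussKernel σ (μ j) x) (fun _ _ ↦ (gaussKernel_pos ..).le)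
      (mem_univ i))
    (sum_nonneg fun _ _ ↦ (gaussKernel_pos ..).le)

lemma tendsto_softmaxAct_smul_zero {F : Type*} [SeminormedAddCommGroup F] [NormedSpace ℝ F]
    {l : Filter (EuclideanSpace ℝ (Fin d))} {g : EuclideanSpace ℝ (Fin d) → F}
    (hg : Tendsto g l (𝓝 0)) :
    Tendsto (fun x ↦ softmaxAct σ μ i x • g x) l (𝓝 0) := by
  have hbdd (x) : ‖softmaxAct σ μ i x‖ ≤ 1 := by
    rw [norm_of_nonneg (softmaxAct_nonneg σ μ i x)]
    exact softmaxAct_le_one σ μ i x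
  exact (isBoundedUnder_of ⟨1, hbdd⟩).smul_tendsto_zero hg

end SoftMax

lemma tendsto_sparker_smul_sub_cobounded (hσ : σ ≠ 0) (μ : Fin M → EuclideanSpace ℝ (Fin d))
    (a : Fin M → ℝ) (ν : EuclideanSpace ℝ (Fin d)) :
    Tendsto (fun x ↦ sparker σ μ a x • (x - ν)) (cobounded _) (𝓝 0) := by
  have hterm (j : Fin M) : Tendsto
      (fun x ↦ a j • softmaxAct σ μ j x • gaussKernel σ (μ j) x • (x - ν))
      (cobounded _) (𝓝 0) := by
    simpa only [smul_zero] using (tendsto_softmaxAct_smul_zero σ μ j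
      (tendsto_gaussKernel_smul_sub_cobounded hσ (μ j) ν)).const_smul (a j)
  simpa only [sparker, sum_smul, mul_smul, sum_const_zero] using
    tendsto_finsetSum univ fun j _ ↦ hterm j

/-- The closed form of the gradient of `sparker σ μ a x` with respect to the location `μ i`,
regarded as a vector field in the data point `x`. -/
noncomputable def locationGradient (σ : ℝ) (μ : Fin M → EuclideanSpace ℝ (Fin d))
    (a : Fin M → ℝ) (i : Fin M) (x : EuclideanSpace ℝ (Fin d)) : EuclideanSpace ℝ (Fin d) :=
  ((1 / σ ^ 2) * (2 * a i * gaussKernel σ (μ i) x - sparker σ μ a x) *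
    softmaxAct σ μ i x) • (x - μ i)

lemma tendsto_locationGradient_cobounded (hσ : σ ≠ 0) (μ : Fin M → EuclideanSpace ℝ (Fin d))
    (a : Fin M → ℝ) (i : Fin M) :
    Tendsto (locationGradient σ μ a i) (cobounded _) (𝓝 0) := by
  have hkernel := (tendsto_gaussKernel_smul_sub_cobounded hσ (μ i) (μ i)).const_smul (2 * a i)
  have hmodel := tendsto_sparker_smul_sub_cobounded hσ μ a (μ i)
  have hdiff : Tendsto
      (fun x ↦ (2 * a i * gaussKernel σ (μ i) x - sparker σ μ a x) • (x - μ i))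
      (cobounded _) (𝓝 0) := by
    simpa only [sub_smul, mul_smul, smul_zero, sub_zero] using hkernel.sub hmodel
  have hscaled := (tendsto_softmaxAct_smul_zero σ μ i hdiff).const_smul (1 / σ ^ 2)
  rw [smul_zero] at hscaled
  refine hscaled.congr fun x ↦ ?_
  rw [locationGradient, smul_smul, smul_smul, mul_right_comm, mul_assoc]

end SparKer

/-- locality of the location dynamics.  The location-gradient field
`x ↦ (1/σ²)(2 a_i k_{μ_i}^σ(x) − f(x)) p_i(x) (x − μ_i)` vanishes at infinity: for every
`ε > 0` there is `R > 0` such that `‖∂f(x)/∂μ_i‖ < ε` whenever `‖x‖ > R`. -/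
theorem location_gradient_vanishes_at_infinity (d M : ℕ) (hd : 1 ≤ d)
    (σ : ℝ) (hσ : 0 < σ) (μ : Fin M → EuclideanSpace ℝ (Fin d)) (a : Fin M → ℝ)
    (i : Fin M) :
    ∀ ε > 0, ∃ R > 0, ∀ x : EuclideanSpace ℝ (Fin d), R < ‖x‖ →
      ‖((1 / σ ^ 2) * (2 * a i * gaussKernel σ (μ i) x - sparker σ μ a x) *
          softmaxAct σ μ i x) • (x - μ i)‖ < ε := by
  have hlim := tendsto_locationGradient_cobounded hσ.ne' μ a i
  have hbasis := (atTop_basis_Ioi' (0 : ℝ)).cobounded_of_norm (E := EuclideanSpace ℝ (Fin d))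
  simpa only [Set.mem_preimage, Set.mem_Ioi, mem_ball_zero_iff, locationGradient] using
    (hbasis.tendsto_iff Metric.nhds_basis_ball).1 hlim
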